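/- arXiv:1603.01462 — 3 statements merged into one kernel-verified Lean document; each statement's English description precedes it below -/
import Mathlib

section
/- For every real number x and every positive integer M, the finite product of cosines satisfies the product-to-sum identity: ∏_{m=1}^{M} cos(x / 2^m) = (1 / 2^{M-1}) · ∑_{m=1}^{2^{M-1}} cos((2m - 1) · x / 2^M). -/
open Real Finset

/-!
Induction on `M`. With `z = x / 2 ^ (M + 1)`, the frequencies at level `M` are the numbers
`(4k + 2) z`, and multiplying by the new factor `cos z` splits each term:
`2 cos ((4k + 2) z) cos z = cos ((4k + 1) z) + cos ((4k + 3) z)`. As `k` runs over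
`0, …, N - 1`, the right-hand sides run over the cosines of the first `2N` odd multiples of `z`.
-/

/-- Multiplying by `2 cos z` turns the sum of cosines over the first `N` odd multiples of `2z`
into the sum over the first `2N` odd multiples of `z`. -/
lemma two_cos_mul_sum_cos_odd (z : ℝ) (N : ℕ) :
    2 * Real.cos z * ∑ m ∈ Finset.Icc 1 N, Real.cos ((2 * (m : ℝ) - 1) * (2 * z)) =
      ∑ m ∈ Finset.Icc 1 (2 * N), Real.cos ((2 * (m : ℝ) - 1) * z) := by
  induction N with
  | zero => simp
  | succ k ih =>
    rw [Finset.sum_Icc_succ_top (by omega), mul_add, ih,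
      show 2 * (k + 1) = 2 * k + 1 + 1 by ring,
      Finset.sum_Icc_succ_top (by omega), Finset.sum_Icc_succ_top (by omega), add_assoc]
    congr 1
    push_cast
    rw [show (2 * (2 * (k : ℝ) + 1) - 1) * z = (2 * ((k : ℝ) + 1) - 1) * (2 * z) - z by ring,
      show (2 * (2 * (k : ℝ) + 1 + 1) - 1) * z = (2 * ((k : ℝ) + 1) - 1) * (2 * z) + z by ring,
      Real.cos_sub, Real.cos_add]
    ring

theorem product_to_sum_identity (x : ℝ) (M : ℕ) (hM : 0 < M) :
    ∏ m ∈ Finset.Icc 1 M, Real.cos (x / 2 ^ m) =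
      (1 / 2 ^ (M - 1)) *
        ∑ m ∈ Finset.Icc 1 (2 ^ (M - 1) : ℕ), Real.cos ((2 * (m : ℝ) - 1) * x / 2 ^ M) := by
  induction M, hM using Nat.le_induction with
  | base => norm_num
  | succ n hn ih =>
    obtain ⟨k, rfl⟩ : ∃ k, n = k + 1 := ⟨n - 1, by omega⟩
    rw [Finset.prod_Icc_succ_top (by omega), ih]
    simp only [Nat.add_sub_cancel, mul_div_assoc]
    have h := two_cos_mul_sum_cos_odd (x / 2 ^ (k + 1 + 1)) (2 ^ k)
    rw [show 2 * (x / 2 ^ (k + 1 + 1)) = x / 2 ^ (k + 1) by rw [pow_succ _ (k + 1)]; field_simp,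
      ← pow_succ'] at h
    rw [← h]
    generalize ∑ m ∈ Finset.Icc 1 (2 ^ k : ℕ), Real.cos ((2 * (m : ℝ) - 1) * (x / 2 ^ (k + 1))) = S
    generalize Real.cos (x / 2 ^ (k + 1 + 1)) = c
    rw [pow_succ]
    field_simp
end

section
/- For every real number x, erf(x) = (1/π) · ∫_0^∞ e^{-u} · sin(2x√u) / u du, where the integral is an improper Lebesgue integral over (0, ∞). -/
/-!
Substituting `u = s ^ 2` turns the right-hand side into
`(2 / π) * ∫ s in Ioi 0, exp (-s ^ 2) * sin (2 * x * s) / s`. The last integral vanishes at `x = 0`,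
and differentiating it under the integral sign (dominated by `2 * exp (-s ^ 2)`) gives the cosine
transform of the Gaussian, `2 * ∫ s in Ioi 0, exp (-s ^ 2) * cos (2 * x * s) = √π * exp (-x ^ 2)`.
The fundamental theorem of calculus then recovers `erf`.
-/

open Real MeasureTheory

noncomputable def erf (x : ℝ) : ℝ :=
  (2 / Real.sqrt Real.pi) * ∫ t in (0 : ℝ)..x, Real.exp (-t ^ 2)

/-- The cosine transform of the Gaussian: half the real part of its Fourier transform. -/
lemma integral_exp_neg_sq_mul_cos (x : ℝ) :
    ∫ s in Set.Ioi (0 : ℝ), Real.exp (-s ^ 2) * (2 * Real.cos (2 * x * s)) =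
      Real.sqrt Real.pi * Real.exp (-x ^ 2) := by
  have h := fourierIntegral_gaussian (b := 1) (by simp) ((2 * x : ℝ) : ℂ)
  have hint : Integrable (fun s : ℝ =>
      Complex.exp (Complex.I * ((2 * x : ℝ) : ℂ) * s) * Complex.exp (-1 * (s : ℂ) ^ 2)) := by
    have := integrable_cexp_quadratic (b := 1) (by simp) (Complex.I * ((2 * x : ℝ) : ℂ)) 0
    refine this.congr (Filter.Eventually.of_forall fun s => ?_)
    simp only [← Complex.exp_add]
    congr 1
    ring
  have hre : ∫ s : ℝ, Real.exp (-s ^ 2) * Real.cos (2 * x * s) =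
      Real.sqrt Real.pi * Real.exp (-x ^ 2) := by
    have h2 := congrArg Complex.re h
    have h3 := integral_re hint
    simp only [RCLike.re_to_complex] at h3
    rw [← h3] at h2
    have hr : ((Real.pi / 1 : ℂ) ^ (1 / 2 : ℂ) * Complex.exp (-((2 * x : ℝ) : ℂ) ^ 2 / (4 * 1)))
        = ((Real.sqrt Real.pi * Real.exp (-x ^ 2) : ℝ) : ℂ) := by
      rw [Real.sqrt_eq_rpow, Complex.ofReal_mul (_ ^ _), Complex.ofReal_cpow Real.pi_pos.le]
      push_cast
      congr 2
      · simp
      · ring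
    rw [hr, Complex.ofReal_re] at h2
    rw [← h2]
    congr 1
    ext s
    rw [← Complex.exp_add, Complex.exp_re]
    congr 1
    · congr 1
      simp [pow_two]
    · congr 1
      simp [pow_two]
  have habs := integral_comp_abs (f := fun s : ℝ => Real.exp (-s ^ 2) * Real.cos (2 * x * s))
  have hcos : ∀ s : ℝ, Real.exp (-|s| ^ 2) * Real.cos (2 * x * |s|) =
      Real.exp (-s ^ 2) * Real.cos (2 * x * s) := by
    intro s
    rw [sq_abs]
    rcases abs_choice s with hs | hs <;> rw [hs]
    rw [mul_neg, Real.cos_neg]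
  simp only [hcos] at habs
  rw [← hre, habs, ← integral_const_mul]
  congr 1
  ext s
  ring

lemma hasDerivAt_integral_exp_neg_sq_mul_sin_div (x : ℝ) :
    HasDerivAt (fun y : ℝ => ∫ s in Set.Ioi (0 : ℝ), Real.exp (-s ^ 2) * (Real.sin (2 * y * s) / s))
      (Real.sqrt Real.pi * Real.exp (-x ^ 2)) x := by
  rw [← integral_exp_neg_sq_mul_cos]
  have hg : Integrable (fun s : ℝ => Real.exp (-s ^ 2)) (volume.restrict (Set.Ioi 0)) := by
    simpa using (integrable_exp_neg_mul_sq (b := 1) one_pos).restrict (s := Set.Ioi 0)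
  refine (hasDerivAt_integral_of_dominated_loc_of_deriv_le
    (F := fun y s : ℝ => Real.exp (-s ^ 2) * (Real.sin (2 * y * s) / s))
    (F' := fun y s : ℝ => Real.exp (-s ^ 2) * (2 * Real.cos (2 * y * s)))
    (bound := fun s => Real.exp (-s ^ 2) * 2) (s := Set.univ) Filter.univ_mem
    (Filter.Eventually.of_forall fun y => Measurable.aestronglyMeasurable (by fun_prop)) ?_
    (Measurable.aestronglyMeasurable (by fun_prop)) ?_ (hg.mul_const 2) ?_).2
  · refine (hg.mul_const (2 * |x|)).mono' (Measurable.aestronglyMeasurable (by fun_prop)) ?_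
    refine (ae_restrict_mem measurableSet_Ioi).mono fun s (hs : 0 < s) => ?_
    rw [norm_mul, norm_div, Real.norm_eq_abs, Real.norm_eq_abs, Real.norm_eq_abs,
      abs_of_pos (Real.exp_pos _), abs_of_pos hs]
    gcongr
    rw [div_le_iff₀ hs]
    have := Real.abs_sin_le_abs (x := 2 * x * s)
    rwa [abs_mul, abs_mul, abs_of_pos hs, abs_two] at this
  · refine Filter.Eventually.of_forall fun s y _ => ?_
    rw [norm_mul, norm_mul, Real.norm_eq_abs, Real.norm_eq_abs, Real.norm_eq_abs,
      abs_of_pos (Real.exp_pos _), abs_two]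
    have := Real.abs_cos_le_one (2 * y * s)
    gcongr
    linarith
  · refine (ae_restrict_mem measurableSet_Ioi).mono fun s (hs : 0 < s) y _ => ?_
    have h1 : HasDerivAt (fun y : ℝ => 2 * y * s) (2 * s) y := by
      simpa using ((hasDerivAt_id y).const_mul 2).mul_const s
    refine ((h1.sin.div_const s).const_mul (Real.exp (-s ^ 2))).congr_deriv ?_
    field_simp

theorem erf_integral_repr (x : ℝ) :
    erf x =
      (1 / Real.pi) *
        ∫ u in Set.Ioi (0 : ℝ), Real.exp (-u) * Real.sin (2 * x * Real.sqrt u) / u := by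
  have hsub : ∫ u in Set.Ioi (0 : ℝ), Real.exp (-u) * Real.sin (2 * x * Real.sqrt u) / u =
      2 * ∫ s in Set.Ioi (0 : ℝ), Real.exp (-s ^ 2) * (Real.sin (2 * x * s) / s) := by
    rw [← integral_comp_rpow_Ioi_of_pos (p := 2) two_pos, ← integral_const_mul]
    refine setIntegral_congr_fun measurableSet_Ioi fun s (hs : 0 < s) => ?_
    have h1 : s ^ ((2 : ℝ) - 1) = s := by norm_num
    simp only [smul_eq_mul, h1, Real.rpow_two, Real.sqrt_sq hs.le]
    field_simp
  have hftc := intervalIntegral.integral_eq_sub_of_hasDerivAt (a := 0) (b := x)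
    (fun y _ => hasDerivAt_integral_exp_neg_sq_mul_sin_div y)
    (Continuous.intervalIntegrable (by fun_prop) _ _)
  simp only [mul_zero, zero_mul, Real.sin_zero, zero_div, integral_zero, sub_zero,
    intervalIntegral.integral_const_mul] at hftc
  rw [hsub, ← hftc, erf]
  have hpi : Real.sqrt Real.pi ≠ 0 := (Real.sqrt_pos.2 Real.pi_pos).ne'
  have hsq : Real.sqrt Real.pi ^ 2 = Real.pi := Real.sq_sqrt Real.pi_pos.le
  -- `2 / √π = (1 / π) * 2 * √π`
  rw [show (1 / Real.pi) = 1 / Real.sqrt Real.pi ^ 2 by rw [hsq]]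
  field_simp
end

section
/- The difference between the two approximating sequences tends to zero: lim_{L→∞} (16 · ∑_{ℓ=1}^{L} L / ((2ℓ - 1)² + 4L²) − 4 · ∑_{ℓ=1}^{L} L / (ℓ² + L²)) = 0, where the limit is taken over positive integers L tending to infinity. -/
/-!
Termwise, `16 L / ((2ℓ - 1)² + 4L²) - 4 L / (ℓ² + L²)` has the numerator
`4 L (4ℓ - 1)` over the product of the two denominators. For `1 ≤ ℓ ≤ L` it is therefore
nonnegative and at most `16 L² / (4L² · L²) = 4 / L²`. Summing the `L` terms, the difference
lies between `0` and `4 / L`, and the squeeze theorem applies.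
-/

lemma term_diff_bounds {x l : ℝ} (hl : 1 ≤ l) (hx : l ≤ x) :
    0 ≤ 16 * (x / ((2 * l - 1) ^ 2 + 4 * x ^ 2)) - 4 * (x / (l ^ 2 + x ^ 2)) ∧
      16 * (x / ((2 * l - 1) ^ 2 + 4 * x ^ 2)) - 4 * (x / (l ^ 2 + x ^ 2)) ≤ 4 / x ^ 2 := by
  have hx0 : 0 < x := by linarith
  have hA : 0 < (2 * l - 1) ^ 2 + 4 * x ^ 2 := by positivity
  have hB : 0 < l ^ 2 + x ^ 2 := by positivity
  have key : 16 * (x / ((2 * l - 1) ^ 2 + 4 * x ^ 2)) - 4 * (x / (l ^ 2 + x ^ 2)) =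
      4 * x * (4 * l - 1) / (((2 * l - 1) ^ 2 + 4 * x ^ 2) * (l ^ 2 + x ^ 2)) := by
    field_simp
    ring
  rw [key]
  have hl4 : 0 ≤ 4 * l - 1 := by linarith
  refine ⟨by positivity, ?_⟩
  calc 4 * x * (4 * l - 1) / (((2 * l - 1) ^ 2 + 4 * x ^ 2) * (l ^ 2 + x ^ 2))
      ≤ 4 * x * (4 * x) / ((4 * x ^ 2) * x ^ 2) := by
        gcongr
        · linarith
        · nlinarith [sq_nonneg (2 * l - 1)]
        · nlinarith [sq_nonneg l]
    _ = 4 / x ^ 2 := by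
        field_simp

theorem difference_tendsto_zero :
    Filter.Tendsto
      (fun L : ℕ =>
        16 * ∑ ℓ ∈ Finset.Icc 1 L, (L : ℝ) / ((2 * (ℓ : ℝ) - 1) ^ 2 + 4 * L ^ 2) -
          4 * ∑ ℓ ∈ Finset.Icc 1 L, (L : ℝ) / ((ℓ : ℝ) ^ 2 + L ^ 2))
      Filter.atTop (nhds 0) := by
  have hb (L : ℕ) (ℓ : ℕ) (h : ℓ ∈ Finset.Icc 1 L) :=
    term_diff_bounds (x := (L : ℝ)) (l := (ℓ : ℝ))
      (by exact_mod_cast (Finset.mem_Icc.1 h).1) (by exact_mod_cast (Finset.mem_Icc.1 h).2)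
  refine squeeze_zero (g := fun L : ℕ => 4 / (L : ℝ)) (fun L => ?_) (fun L => ?_)
    (tendsto_const_div_atTop_nhds_zero_nat 4)
  · rw [Finset.mul_sum, Finset.mul_sum, ← Finset.sum_sub_distrib]
    exact Finset.sum_nonneg fun ℓ h => (hb L ℓ h).1
  · rw [Finset.mul_sum, Finset.mul_sum, ← Finset.sum_sub_distrib]
    refine (Finset.sum_le_sum fun ℓ h => (hb L ℓ h).2).trans_eq ?_
    rw [Finset.sum_const, Nat.card_Icc, nsmul_eq_mul, Nat.add_sub_cancel]
    -- At `L = 0` both sides are `0`, since division by zero gives zero.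
    rcases eq_or_ne (L : ℝ) 0 with h | h
    · simp [h]
    · field_simp
end
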